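/- Let s ∈ (0,1), 1 < p < ∞, and f ∈ L^p(ℝ^d) be a scalar function with Poisson integral u(x,t) = (p_t ∗ f)(x). Then there exists a constant C = C(d,p) > 0 such that ∫_{ℝ^d} ‖f − u(·, |y|)‖_{L^p(ℝ^d)}^p / |y|^{d+sp} dy ≤ (C / s^p) ∫_0^∞ ‖∂_t u(·,t)‖_{L^p(ℝ^d)}^p / t^{sp−p+1} dt. -/

import Mathlib

open MeasureTheory Filter Set
open scoped ENNReal NNReal Topology

noncomputable section

abbrev Ed (d : ℕ) : Type := EuclideanSpace ℝ (Fin d)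

/-- The surface measure `ω_d` of the unit sphere in `ℝ^{d+1}`. -/
def sphereVol (d : ℕ) : ℝ :=
  ((d : ℝ) + 1) * (volume (Metric.ball (0 : EuclideanSpace ℝ (Fin (d+1))) 1)).toReal

/-- The Poisson kernel `p_t(x)` for the upper half-space `ℝ^d × (0,∞)`. -/
def poissonKernelEd (d : ℕ) (t : ℝ) (x : Ed d) : ℝ :=
  (2 / sphereVol d) * t / (‖x‖ ^ 2 + t ^ 2) ^ (((d : ℝ) + 1) / 2)

/-- The (componentwise) Poisson integral `u(x,t) = (p_t ∗ f)(x)` of a vector field. -/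
def poissonInt (d m : ℕ) (f : Ed d → Ed m) (x : Ed d) (t : ℝ) : Ed m :=
  ∫ y, poissonKernelEd d t y • f (x - y)

/-- The Poisson integral `u(x,t) = (p_t ∗ f)(x)` of a scalar function. -/
def poissonIntS (d : ℕ) (f : Ed d → ℝ) (x : Ed d) (t : ℝ) : ℝ :=
  ∫ y, poissonKernelEd d t y * f (x - y)

/-!
The Poisson kernel is an approximate identity, so `u(·, t) → f` in `L^p` as `t → 0`, and almost
everywhere along a sequence of times. Integrating `∂_t u(x, ·)` from these times up to `r` bounds
`‖f(x) - u(x, r)‖` by `∫_0^r ‖∂_t u(x, t)‖ dt` for almost every `x` and all `r > 0`. The integral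
over `y` is radial: in polar coordinates its weight becomes `r^(-1 - s p) dr`, and Hardy's
inequality with the constant `1 / s^p`, applied for each fixed `x`, gives the estimate after
exchanging the integrals in `x` and `t`. The constant `C` comes from the area of the unit sphere of
`ℝ^d`, so it depends on `d` only.
-/

section IntegralInequalities

variable {α : Type*} [MeasurableSpace α] {μ : Measure α}
  {E : Type*} [NormedAddCommGroup E] {p : ℝ}

lemma eLpNorm_ofReal_rpow_eq_lintegral (hp : 0 < p) (g : α → E) :
    eLpNorm g (ENNReal.ofReal p) μ ^ p = ∫⁻ x, ‖g x‖ₑ ^ p ∂μ := by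
  simpa only [ENNReal.ofReal, Real.coe_toNNReal p hp.le] using
    eLpNorm_nnreal_pow_eq_lintegral (f := g) (μ := μ) (Real.toNNReal_pos.2 hp).ne'

lemma rpow_lintegral_mul_le (hp : 1 ≤ p) {k h : α → ℝ≥0∞} (hk : AEMeasurable k μ)
    (hh : AEMeasurable h μ) :
    (∫⁻ x, k x * h x ∂μ) ^ p ≤ (∫⁻ x, k x ∂μ) ^ (p - 1) * ∫⁻ x, k x * h x ^ p ∂μ := by
  have hp0 : 0 < p := one_pos.trans_le hp
  have hp1 : 0 ≤ 1 - 1 / p := sub_nonneg.2 ((div_le_one hp0).2 hp)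
  have split_mul : ∀ x, k x * h x = k x ^ (1 - 1 / p) * (k x * h x ^ p) ^ (1 / p) := fun x ↦ by
    rw [ENNReal.mul_rpow_of_nonneg _ _ (by positivity), ← ENNReal.rpow_mul,
      mul_one_div_cancel hp0.ne', ENNReal.rpow_one, ← mul_assoc,
      ← ENNReal.rpow_add_of_nonneg _ _ hp1 (by positivity), sub_add_cancel, ENNReal.rpow_one]
  calc (∫⁻ x, k x * h x ∂μ) ^ p
      ≤ ((∫⁻ x, k x ∂μ) ^ (1 - 1 / p) * (∫⁻ x, k x * h x ^ p ∂μ) ^ (1 / p)) ^ p := by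
        simp_rw [split_mul]
        gcongr
        exact ENNReal.lintegral_mul_norm_pow_le hk (hk.mul (hh.pow_const p)) hp1 (by positivity)
          (sub_add_cancel _ _)
    _ = (∫⁻ x, k x ∂μ) ^ (p - 1) * ∫⁻ x, k x * h x ^ p ∂μ := by
        rw [ENNReal.mul_rpow_of_nonneg _ _ hp0.le, ← ENNReal.rpow_mul, ← ENNReal.rpow_mul,
          one_div_mul_cancel hp0.ne', ENNReal.rpow_one, sub_mul, one_mul,
          one_div_mul_cancel hp0.ne']

lemma integrable_smul_of_bounded_of_memLp [NormedSpace ℝ E] (hp : 1 ≤ p) {k : α → ℝ} {g : α → E}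
    {M : ℝ} (hk : Integrable k μ) (hkM : ∀ x, ‖k x‖ ≤ M) (hg : MemLp g (ENNReal.ofReal p) μ) :
    Integrable (fun x ↦ k x • g x) μ := by
  have hp0 : 0 < p := one_pos.trans_le hp
  refine ⟨hk.aestronglyMeasurable.smul hg.aestronglyMeasurable, ?_⟩
  suffices h : (∫⁻ x, ‖k x‖ₑ * ‖g x‖ₑ ∂μ) ^ p < ∞ by
    simpa only [HasFiniteIntegral, enorm_smul] using (ENNReal.rpow_lt_top_iff_of_pos hp0).1 h
  calc (∫⁻ x, ‖k x‖ₑ * ‖g x‖ₑ ∂μ) ^ p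
      ≤ (∫⁻ x, ‖k x‖ₑ ∂μ) ^ (p - 1) * ∫⁻ x, ‖k x‖ₑ * ‖g x‖ₑ ^ p ∂μ :=
        rpow_lintegral_mul_le hp hk.aestronglyMeasurable.enorm hg.aestronglyMeasurable.enorm
    _ ≤ (∫⁻ x, ‖k x‖ₑ ∂μ) ^ (p - 1) * ∫⁻ x, ENNReal.ofReal M * ‖g x‖ₑ ^ p ∂μ := by
        gcongr with x
        rw [← ofReal_norm]
        exact ENNReal.ofReal_le_ofReal (hkM x)
    _ = (∫⁻ x, ‖k x‖ₑ ∂μ) ^ (p - 1) *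
          (ENNReal.ofReal M * eLpNorm g (ENNReal.ofReal p) μ ^ p) := by
        rw [lintegral_const_mul' _ _ ENNReal.ofReal_ne_top, eLpNorm_ofReal_rpow_eq_lintegral hp0]
    _ < ∞ := ENNReal.mul_lt_top
        (ENNReal.rpow_lt_top_of_nonneg (sub_nonneg.2 hp) hk.hasFiniteIntegral.ne)
        (ENNReal.mul_lt_top ENNReal.ofReal_lt_top
          (ENNReal.rpow_lt_top_of_nonneg hp0.le hg.eLpNorm_ne_top))

lemma lintegral_eLpNorm_rpow_mul {β : Type*} [MeasurableSpace β] {ν : Measure β} [SFinite μ]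
    [SFinite ν] (hp : 0 < p) {h : α → β → E} {w : β → ℝ≥0∞} (hw : AEMeasurable w ν)
    (hw_top : ∀ t, w t ≠ ∞) (hh : AEStronglyMeasurable (Function.uncurry h) (μ.prod ν)) :
    ∫⁻ t, eLpNorm (h · t) (ENNReal.ofReal p) μ ^ p * w t ∂ν =
      ∫⁻ x, ∫⁻ t, ‖h x t‖ₑ ^ p * w t ∂ν ∂μ := by
  rw [lintegral_lintegral_swap ((hh.enorm.pow_const p).mul hw.comp_snd)]
  refine lintegral_congr fun t ↦ ?_
  rw [lintegral_mul_const' _ _ (hw_top t), eLpNorm_ofReal_rpow_eq_lintegral hp]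

lemma enorm_sub_le_lintegral_enorm_deriv [NormedSpace ℝ E] [CompleteSpace E] {u : ℝ → E}
    {a b : ℝ} (hab : a ≤ b) (hu : ∀ t ∈ Icc a b, DifferentiableAt ℝ u t) :
    ‖u b - u a‖ₑ ≤ ∫⁻ t in Ioc a b, ‖deriv u t‖ₑ := by
  by_cases h_top : ∫⁻ t in Ioc a b, ‖deriv u t‖ₑ = ∞
  · exact h_top ▸ le_top
  have h_int : IntervalIntegrable (deriv u) volume a b :=
    (intervalIntegrable_iff_integrableOn_Ioc_of_le hab).2
      ⟨(stronglyMeasurable_deriv u).aestronglyMeasurable, lt_top_iff_ne_top.2 h_top⟩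
  rw [← intervalIntegral.integral_deriv_eq_sub (by rwa [uIcc_of_le hab]) h_int,
    intervalIntegral.integral_of_le hab]
  exact enorm_integral_le_lintegral_enorm _

end IntegralInequalities

section HardyInequality

lemma lintegral_Ioc_rpow_sub_one {s r : ℝ} (hs : 0 < s) (hr : 0 ≤ r) :
    ∫⁻ t in Ioc 0 r, ENNReal.ofReal (t ^ (s - 1)) = ENNReal.ofReal (r ^ s / s) := by
  have h_int : IntegrableOn (fun t : ℝ ↦ t ^ (s - 1)) (Ioc 0 r) :=
    (intervalIntegrable_iff_integrableOn_Ioc_of_le hr).1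
      (intervalIntegral.intervalIntegrable_rpow' (by linarith))
  rw [← ofReal_integral_eq_lintegral_ofReal h_int, ← intervalIntegral.integral_of_le hr,
    integral_rpow (Or.inl (by linarith)), sub_add_cancel, Real.zero_rpow hs.ne', sub_zero]
  filter_upwards [ae_restrict_mem measurableSet_Ioc] with t ht using Real.rpow_nonneg ht.1.le _

lemma lintegral_Ioi_rpow_neg_sub_one {s t : ℝ} (hs : 0 < s) (ht : 0 < t) :
    ∫⁻ r in Ioi t, ENNReal.ofReal (r ^ (-s - 1)) = ENNReal.ofReal (t ^ (-s) / s) := by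
  rw [← ofReal_integral_eq_lintegral_ofReal (integrableOn_Ioi_rpow_of_lt (by linarith) ht),
    integral_Ioi_rpow_of_lt (by linarith) ht, sub_add_cancel, neg_div_neg_eq]
  filter_upwards [ae_restrict_mem measurableSet_Ioi] with r hr
    using Real.rpow_nonneg (ht.trans hr).le _

lemma lintegral_Ioi_mul_lintegral_Ioc {a : ℝ} {w G : ℝ → ℝ≥0∞} (hw : Measurable w)
    (hG : Measurable G) :
    ∫⁻ r in Ioi a, w r * ∫⁻ t in Ioc a r, G t = ∫⁻ t in Ioi a, (∫⁻ r in Ioi t, w r) * G t := by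
  let T : Set (ℝ × ℝ) := {z | z.2 ≤ z.1}
  have hT : MeasurableSet T := measurableSet_le measurable_snd measurable_fst
  have h_meas : Measurable (T.indicator fun z ↦ w z.1 * G z.2) := by fun_prop (disch := exact hT)
  calc ∫⁻ r in Ioi a, w r * ∫⁻ t in Ioc a r, G t
      = ∫⁻ r in Ioi a, ∫⁻ t in Ioi a, T.indicator (fun z ↦ w z.1 * G z.2) (r, t) := by
        refine lintegral_congr fun r ↦ ?_
        rw [← lintegral_const_mul _ hG, ← Ioi_inter_Iic, inter_comm,
          ← setLIntegral_indicator measurableSet_Iic]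
        rfl
    _ = ∫⁻ t in Ioi a, ∫⁻ r in Ioi a, T.indicator (fun z ↦ w z.1 * G z.2) (r, t) :=
        lintegral_lintegral_swap h_meas.aemeasurable
    _ = ∫⁻ t in Ioi a, (∫⁻ r in Ioi t, w r) * G t := by
        refine setLIntegral_congr_fun measurableSet_Ioi fun t (ht : a < t) ↦ ?_
        change ∫⁻ r in Ioi a, (Ici t).indicator (fun r ↦ w r * G t) r = _
        rw [setLIntegral_indicator measurableSet_Ici, inter_eq_left.2 (Ici_subset_Ioi.2 ht),
          setLIntegral_congr Ioi_ae_eq_Ici.symm, lintegral_mul_const _ hw]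

variable {p s : ℝ} {g : ℝ → ℝ≥0∞}

-- Jensen's inequality on `(0, r]` for the finite measure `t ^ (s - 1) dt`, of mass `r ^ s / s`.
lemma rpow_lintegral_Ioc_le {r : ℝ} (hp : 1 ≤ p) (hs : 0 < s) (hr : 0 ≤ r) (hg : Measurable g) :
    (∫⁻ t in Ioc 0 r, g t) ^ p ≤
      ENNReal.ofReal ((r ^ s / s) ^ (p - 1)) *
        ∫⁻ t in Ioc 0 r, g t ^ p * ENNReal.ofReal (t ^ ((1 - s) * (p - 1))) := by
  have hp0 : 0 < p := one_pos.trans_le hp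
  have split_weight : ∫⁻ t in Ioc 0 r, g t =
      ∫⁻ t in Ioc 0 r, ENNReal.ofReal (t ^ (s - 1)) * (g t * ENNReal.ofReal (t ^ (1 - s))) := by
    refine setLIntegral_congr_fun measurableSet_Ioc fun t ht ↦ ?_
    have ht0 : 0 < t := ht.1
    rw [mul_left_comm, ← ENNReal.ofReal_mul (by positivity), ← Real.rpow_add ht0]
    simp
  have merge_weight : ∫⁻ t in Ioc 0 r,
      ENNReal.ofReal (t ^ (s - 1)) * (g t * ENNReal.ofReal (t ^ (1 - s))) ^ p =
      ∫⁻ t in Ioc 0 r, g t ^ p * ENNReal.ofReal (t ^ ((1 - s) * (p - 1))) := by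
    refine setLIntegral_congr_fun measurableSet_Ioc fun t ht ↦ ?_
    have ht0 : 0 < t := ht.1
    rw [ENNReal.mul_rpow_of_nonneg _ _ hp0.le, ENNReal.ofReal_rpow_of_pos (by positivity),
      mul_left_comm, ← ENNReal.ofReal_mul (by positivity), ← Real.rpow_mul ht0.le,
      ← Real.rpow_add ht0]
    ring_nf
  rw [split_weight, ← merge_weight, ← ENNReal.ofReal_rpow_of_nonneg (by positivity) (by linarith),
    ← lintegral_Ioc_rpow_sub_one hs hr]
  exact rpow_lintegral_mul_le hp (by fun_prop) (by fun_prop)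

lemma lintegral_rpow_lintegral_Ioc_le (hp : 1 ≤ p) (hs : 0 < s) (hg : Measurable g) :
    ∫⁻ r in Ioi 0, (∫⁻ t in Ioc 0 r, g t) ^ p * ENNReal.ofReal (1 / r ^ (1 + s * p)) ≤
      ENNReal.ofReal (1 / s ^ p) *
        ∫⁻ t in Ioi 0, g t ^ p * ENNReal.ofReal (1 / t ^ (s * p - p + 1)) := by
  calc ∫⁻ r in Ioi 0, (∫⁻ t in Ioc 0 r, g t) ^ p * ENNReal.ofReal (1 / r ^ (1 + s * p))
      ≤ ∫⁻ r in Ioi 0, ENNReal.ofReal ((1 / s) ^ (p - 1)) * ENNReal.ofReal (r ^ (-s - 1)) *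
          ∫⁻ t in Ioc 0 r, g t ^ p * ENNReal.ofReal (t ^ ((1 - s) * (p - 1))) := by
        refine setLIntegral_mono' measurableSet_Ioi fun r (hr : 0 < r) ↦ ?_
        grw [rpow_lintegral_Ioc_le hp hs hr.le hg]
        rw [mul_right_comm, ← ENNReal.ofReal_mul (by positivity),
          ← ENNReal.ofReal_mul (by positivity)]
        refine le_of_eq ?_
        congr 2
        rw [div_eq_mul_one_div (r ^ s), Real.mul_rpow (by positivity) (by positivity),
          ← Real.rpow_mul hr.le, one_div (r ^ (1 + s * p)), ← Real.rpow_neg hr.le,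
          mul_right_comm, ← Real.rpow_add hr, mul_comm]
        ring_nf
    _ = ∫⁻ t in Ioi 0, ENNReal.ofReal ((1 / s) ^ (p - 1)) *
          (∫⁻ r in Ioi t, ENNReal.ofReal (r ^ (-s - 1))) *
            (g t ^ p * ENNReal.ofReal (t ^ ((1 - s) * (p - 1)))) := by
        rw [lintegral_Ioi_mul_lintegral_Ioc (by fun_prop) (by fun_prop)]
        simp_rw [lintegral_const_mul' _ _ ENNReal.ofReal_ne_top]
    _ = ∫⁻ t in Ioi 0, ENNReal.ofReal (1 / s ^ p) *
          (g t ^ p * ENNReal.ofReal (1 / t ^ (s * p - p + 1))) := by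
        refine setLIntegral_congr_fun measurableSet_Ioi fun t (ht : 0 < t) ↦ ?_
        rw [lintegral_Ioi_rpow_neg_sub_one hs ht, mul_left_comm, mul_left_comm (ENNReal.ofReal _),
          ← ENNReal.ofReal_mul (by positivity), ← ENNReal.ofReal_mul (by positivity),
          ← ENNReal.ofReal_mul (by positivity)]
        congr 2
        have s_rpow : (1 / s) ^ (p - 1) * (1 / s) = 1 / s ^ p := by
          rw [← Real.rpow_add_one (by positivity), sub_add_cancel,
            Real.div_rpow zero_le_one hs.le, Real.one_rpow]
        have t_rpow : t ^ (-s) * t ^ ((1 - s) * (p - 1)) = 1 / t ^ (s * p - p + 1) := by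
          rw [← Real.rpow_add ht, one_div, ← Real.rpow_neg ht.le]
          ring_nf
        rw [← s_rpow, ← t_rpow]
        ring
    _ = _ := lintegral_const_mul' _ _ ENNReal.ofReal_ne_top

end HardyInequality

section AddHaar

variable {V : Type*} [NormedAddCommGroup V] [NormedSpace ℝ V] [FiniteDimensional ℝ V]
  [MeasurableSpace V] [BorelSpace V] {μ : Measure V} [μ.IsAddHaarMeasure]

lemma lintegral_fun_norm_addHaar [Nontrivial V] {F : ℝ → ℝ≥0∞} (hF : Measurable F) :
    ∫⁻ y, F ‖y‖ ∂μ = μ.toSphere univ *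
      ∫⁻ r in Ioi 0, ENNReal.ofReal (r ^ (Module.finrank ℝ V - 1)) * F r := by
  calc ∫⁻ y, F ‖y‖ ∂μ
      = ∫⁻ y : ({0}ᶜ : Set V), F ‖y.1‖ ∂μ.comap (↑) := by
        rw [lintegral_subtype_comap (measurableSet_singleton _).compl fun y ↦ F ‖y‖,
          restrict_compl_singleton]
    _ = ∫⁻ z, F z.2 ∂μ.toSphere.prod (.volumeIoiPow (Module.finrank ℝ V - 1)) := by
        simpa only [homeomorphUnitSphereProd_apply_snd_coe] using
          μ.measurePreserving_homeomorphUnitSphereProd.lintegral_comp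
            (f := fun z ↦ F z.2) (by fun_prop)
    _ = μ.toSphere univ * ∫⁻ r : Ioi (0 : ℝ), F r ∂.volumeIoiPow (Module.finrank ℝ V - 1) := by
        rw [lintegral_prod _ (by fun_prop)]
        simp only [lintegral_const, mul_comm]
    _ = _ := by
        rw [Measure.volumeIoiPow, lintegral_withDensity_eq_lintegral_mul _ (by fun_prop)
          (by fun_prop), ← lintegral_subtype_comap measurableSet_Ioi]
        rfl

lemma lintegral_fun_norm_mul_norm_rpow [Nontrivial V] {F : ℝ → ℝ≥0∞} (hF : Measurable F) (a : ℝ) :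
    ∫⁻ y, F ‖y‖ * ENNReal.ofReal (1 / ‖y‖ ^ (Module.finrank ℝ V + a)) ∂μ =
      μ.toSphere univ * ∫⁻ r in Ioi 0, F r * ENNReal.ofReal (1 / r ^ (1 + a)) := by
  rw [lintegral_fun_norm_addHaar (F := fun r ↦
    F r * ENNReal.ofReal (1 / r ^ (Module.finrank ℝ V + a))) (by fun_prop)]
  congr 1
  refine setLIntegral_congr_fun measurableSet_Ioi fun r (hr : 0 < r) ↦ ?_
  have rpow_finrank_add :
      r ^ (Module.finrank ℝ V + a) = r ^ (Module.finrank ℝ V - 1) * r ^ (1 + a) := by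
    rw [← Real.rpow_natCast, ← Real.rpow_add hr, Nat.cast_pred Module.finrank_pos]
    ring_nf
  rw [mul_left_comm, ← ENNReal.ofReal_mul (by positivity), rpow_finrank_add]
  field_simp

end AddHaar

section ApproximateIdentity

variable {V : Type*} [NormedAddCommGroup V] [MeasurableSpace V] [BorelSpace V] {μ : Measure V}
  {E : Type*} [NormedAddCommGroup E] {q : ℝ≥0∞} {p : ℝ} {f : V → E}

lemma eLpNorm_integral_smul_sub_rpow_le [SecondCountableTopology V] [SFinite μ]
    [NormedSpace ℝ E] [CompleteSpace E] (hp : 1 ≤ p) {k : V → ℝ} (hk : Measurable k) (hk0 : 0 ≤ k)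
    (hk1 : ∫ y, k y ∂μ = 1) (hf : StronglyMeasurable f)
    (hkf : ∀ x, Integrable (fun y ↦ k y • f (x - y)) μ) :
    eLpNorm (fun x ↦ (∫ y, k y • f (x - y) ∂μ) - f x) (ENNReal.ofReal p) μ ^ p ≤
      ∫⁻ y, ENNReal.ofReal (k y) *
        eLpNorm (fun x ↦ f (x - y) - f x) (ENNReal.ofReal p) μ ^ p ∂μ := by
  have hp0 : 0 < p := one_pos.trans_le hp
  have hk_int : Integrable k μ := .of_integral_ne_zero (by simp [hk1])
  have lintegral_k : ∫⁻ y, ENNReal.ofReal (k y) ∂μ = 1 := by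
    rw [← ofReal_integral_eq_lintegral_ofReal hk_int (ae_of_all _ hk0), hk1, ENNReal.ofReal_one]
  have h_meas : StronglyMeasurable fun z : V × V ↦ f (z.1 - z.2) - f z.1 :=
    (hf.comp_measurable measurable_sub).sub (hf.comp_measurable measurable_fst)
  have enorm_le (x : V) : ‖(∫ y, k y • f (x - y) ∂μ) - f x‖ₑ ≤
      ∫⁻ y, ENNReal.ofReal (k y) * ‖f (x - y) - f x‖ₑ ∂μ := by
    calc ‖(∫ y, k y • f (x - y) ∂μ) - f x‖ₑ
        = ‖∫ y, k y • (f (x - y) - f x) ∂μ‖ₑ := by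
          simp_rw [smul_sub]
          rw [integral_sub (hkf x) (hk_int.smul_const _), integral_smul_const, hk1, one_smul]
      _ ≤ ∫⁻ y, ENNReal.ofReal (k y) * ‖f (x - y) - f x‖ₑ ∂μ := by
          simpa only [enorm_smul, Real.enorm_of_nonneg (hk0 _)] using
            enorm_integral_le_lintegral_enorm fun y ↦ k y • (f (x - y) - f x)
  calc eLpNorm (fun x ↦ (∫ y, k y • f (x - y) ∂μ) - f x) (ENNReal.ofReal p) μ ^ p
      = ∫⁻ x, ‖(∫ y, k y • f (x - y) ∂μ) - f x‖ₑ ^ p ∂μ := eLpNorm_ofReal_rpow_eq_lintegral hp0 _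
    _ ≤ ∫⁻ x, ∫⁻ y, ‖f (x - y) - f x‖ₑ ^ p * ENNReal.ofReal (k y) ∂μ ∂μ := by
        refine lintegral_mono fun x ↦ ?_
        have h_meas_right : Measurable fun y ↦ ‖f (x - y) - f x‖ₑ :=
          (h_meas.comp_measurable measurable_prodMk_left).enorm
        have jensen := rpow_lintegral_mul_le hp (μ := μ) hk.ennreal_ofReal.aemeasurable
          h_meas_right.aemeasurable
        rw [lintegral_k, ENNReal.one_rpow, one_mul] at jensen
        simpa only [mul_comm] using (ENNReal.rpow_le_rpow (enorm_le x) hp0.le).trans jensen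
    _ = _ := by
        simp_rw [mul_comm (ENNReal.ofReal _)]
        exact (lintegral_eLpNorm_rpow_mul hp0 (by fun_prop) (fun _ ↦ ENNReal.ofReal_ne_top)
          h_meas.aestronglyMeasurable).symm

variable [μ.IsAddLeftInvariant]

lemma eLpNorm_translate_sub_le (hq : 1 ≤ q) (hf : AEStronglyMeasurable f μ) (y : V) :
    eLpNorm (fun x ↦ f (x - y) - f x) q μ ≤ 2 * eLpNorm f q μ := by
  have h_shift : MeasurePreserving (· - y) μ μ := measurePreserving_sub_right μ y
  calc eLpNorm (fun x ↦ f (x - y) - f x) q μ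
      ≤ eLpNorm (f ∘ (· - y)) q μ + eLpNorm f q μ :=
        eLpNorm_sub_le (hf.comp_measurePreserving h_shift) hf hq
    _ = 2 * eLpNorm f q μ := by rw [eLpNorm_comp_measurePreserving hf h_shift, two_mul]

variable [IsLocallyFiniteMeasure μ]

lemma continuous_eLpNorm_translate_sub [μ.InnerRegularCompactLTTop] (hq : 1 ≤ q) (hq_top : q ≠ ∞)
    (hf : MemLp f q μ) : Continuous fun y ↦ eLpNorm (fun x ↦ f (x - y) - f x) q μ := by
  have : Fact (1 ≤ q) := ⟨hq⟩
  have : Fact (q ≠ ∞) := ⟨hq_top⟩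
  have h_cont : Continuous fun y : V ↦ edist (DomAddAct.mk (-y) +ᵥ hf.toLp f) (hf.toLp f) :=
    ((DomAddAct.continuous_mk.comp continuous_neg).vadd continuous_const).edist continuous_const
  refine h_cont.congr fun y ↦ ?_
  rw [DomAddAct.mk_vadd_toLp, Lp.edist_toLp_toLp]
  simp only [vadd_eq_add, neg_add_eq_sub]
  rfl

lemma tendsto_lintegral_mul_eLpNorm_translate_smul [μ.InnerRegularCompactLTTop] [NormedSpace ℝ V]
    (hp : 1 ≤ p) (hf : MemLp f (ENNReal.ofReal p) μ) {k : V → ℝ≥0∞} (hk : Measurable k)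
    (hk_int : ∫⁻ z, k z ∂μ ≠ ∞) :
    Tendsto (fun t : ℝ ↦
      ∫⁻ z, k z * eLpNorm (fun x ↦ f (x - t • z) - f x) (ENNReal.ofReal p) μ ^ p ∂μ)
      (𝓝 0) (𝓝 0) := by
  have hp0 : 0 < p := one_pos.trans_le hp
  have hq : 1 ≤ ENNReal.ofReal p := ENNReal.one_le_ofReal.2 hp
  let ω : V → ℝ≥0∞ := fun y ↦ eLpNorm (fun x ↦ f (x - y) - f x) (ENNReal.ofReal p) μ ^ p
  have ω_cont : Continuous ω := ENNReal.continuous_rpow_const.comp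
    (continuous_eLpNorm_translate_sub hq ENNReal.ofReal_ne_top hf)
  have ω_zero : ω 0 = 0 := by simp [ω, hp0]
  have ω_smul_tendsto (z : V) : Tendsto (fun t : ℝ ↦ ω (t • z)) (𝓝 0) (𝓝 0) := by
    simpa only [zero_smul, ω_zero] using
      (show Continuous fun t : ℝ ↦ ω (t • z) by fun_prop).tendsto 0
  have ω_le (y : V) : ω y ≤ (2 * eLpNorm f (ENNReal.ofReal p) μ) ^ p :=
    ENNReal.rpow_le_rpow (eLpNorm_translate_sub_le hq hf.aestronglyMeasurable y) hp0.le
  have bound_ne_top : ∫⁻ z, k z * (2 * eLpNorm f (ENNReal.ofReal p) μ) ^ p ∂μ ≠ ∞ := by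
    rw [lintegral_mul_const _ hk]
    have := hf.eLpNorm_ne_top
    finiteness
  rw [← lintegral_zero (μ := μ)]
  refine tendsto_lintegral_filter_of_dominated_convergence _
    (Eventually.of_forall fun t ↦ hk.mul (ω_cont.comp (continuous_const_smul t)).measurable)
    (Eventually.of_forall fun t ↦ ae_of_all _ fun z ↦ mul_le_mul' le_rfl (ω_le (t • z)))
    bound_ne_top ?_
  filter_upwards [ae_lt_top hk hk_int] with z hz
  simpa using ENNReal.Tendsto.const_mul (ω_smul_tendsto z) (Or.inr hz.ne)

end ApproximateIdentity

section GaussianSubordination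

lemma lintegral_Ioi_rpow_mul_exp_neg_mul {a r : ℝ} (ha : 0 < a) (hr : 0 < r) :
    ∫⁻ l in Ioi 0, ENNReal.ofReal (l ^ (a - 1) * Real.exp (-(r * l))) =
      ENNReal.ofReal ((1 / r) ^ a * Real.Gamma a) := by
  have h_eq := Real.integral_rpow_mul_exp_neg_mul_Ioi ha hr
  rw [← h_eq, ofReal_integral_eq_lintegral_ofReal]
  · exact .of_integral_ne_zero <| h_eq ▸
      mul_ne_zero (by positivity) (Real.Gamma_pos_of_pos ha).ne'
  · filter_upwards [ae_restrict_mem measurableSet_Ioi] with l hl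
    have hl0 : (0 : ℝ) < l := hl
    positivity

variable {V : Type*} [NormedAddCommGroup V] [InnerProductSpace ℝ V] [FiniteDimensional ℝ V]
  [MeasurableSpace V] [BorelSpace V]

lemma lintegral_exp_neg_mul_sq_norm {b : ℝ} (hb : 0 < b) :
    ∫⁻ y : V, ENNReal.ofReal (Real.exp (-b * ‖y‖ ^ 2)) =
      ENNReal.ofReal ((Real.pi / b) ^ (Module.finrank ℝ V / 2 : ℝ)) := by
  have h_eq := GaussianFourier.integral_rexp_neg_mul_sq_norm (V := V) hb
  rw [← h_eq, ofReal_integral_eq_lintegral_ofReal]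
  · exact .of_integral_ne_zero (by rw [h_eq]; positivity)
  · exact ae_of_all _ fun y ↦ (Real.exp_pos _).le

lemma lintegral_exp_neg_norm_sq_add_one_mul {l : ℝ} (hl : 0 < l) :
    ∫⁻ y : V, ENNReal.ofReal (Real.exp (-((‖y‖ ^ 2 + 1) * l))) =
      ENNReal.ofReal (Real.exp (-(1 * l)) *
        (Real.pi / l) ^ (Module.finrank ℝ V / 2 : ℝ)) := by
  rw [ENNReal.ofReal_mul (Real.exp_pos _).le, ← lintegral_exp_neg_mul_sq_norm hl,
    ← lintegral_const_mul' _ _ ENNReal.ofReal_ne_top]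
  refine lintegral_congr fun y ↦ ?_
  rw [← ENNReal.ofReal_mul (Real.exp_pos _).le, ← Real.exp_add]
  ring_nf

/- Write `Γ(a) (‖y‖² + 1)^(-a)` as `∫₀^∞ l^(a-1) e^(-(‖y‖² + 1) l) dl` and integrate the Gaussian in
`y` first. -/
lemma lintegral_norm_sq_add_one_rpow_neg {a : ℝ} (ha : (Module.finrank ℝ V / 2 : ℝ) < a) :
    ∫⁻ y : V, ENNReal.ofReal ((‖y‖ ^ 2 + 1) ^ (-a)) =
      ENNReal.ofReal (Real.pi ^ (Module.finrank ℝ V / 2 : ℝ) *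
        Real.Gamma (a - Module.finrank ℝ V / 2) / Real.Gamma a) := by
  set n : ℝ := Module.finrank ℝ V / 2 with hn
  have ha0 : 0 < a := lt_of_le_of_lt (by positivity) ha
  have hG : Real.Gamma a ≠ 0 := (Real.Gamma_pos_of_pos ha0).ne'
  have rpow_eq (y : V) : ENNReal.ofReal ((‖y‖ ^ 2 + 1) ^ (-a)) = ENNReal.ofReal (1 / Real.Gamma a) *
      ∫⁻ l in Ioi 0, ENNReal.ofReal (l ^ (a - 1) * Real.exp (-((‖y‖ ^ 2 + 1) * l))) := by
    rw [lintegral_Ioi_rpow_mul_exp_neg_mul ha0 (by positivity),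
      ← ENNReal.ofReal_mul' (mul_nonneg (by positivity) (Real.Gamma_pos_of_pos ha0).le),
      mul_comm, mul_assoc, mul_one_div_cancel hG, mul_one, one_div,
      Real.inv_rpow (by positivity), Real.rpow_neg (by positivity)]
  have gaussian_eq {l : ℝ} (hl : 0 < l) :
      ∫⁻ y : V, ENNReal.ofReal (l ^ (a - 1) * Real.exp (-((‖y‖ ^ 2 + 1) * l))) =
        ENNReal.ofReal (Real.pi ^ n) *
          ENNReal.ofReal (l ^ (a - n - 1) * Real.exp (-(1 * l))) := by
    simp_rw [ENNReal.ofReal_mul (Real.rpow_nonneg hl.le _)]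
    rw [lintegral_const_mul' _ _ ENNReal.ofReal_ne_top, lintegral_exp_neg_norm_sq_add_one_mul hl,
      ← hn, ← ENNReal.ofReal_mul (by positivity), ← ENNReal.ofReal_mul (by positivity),
      ← ENNReal.ofReal_mul (by positivity), Real.div_rpow Real.pi_pos.le hl.le, sub_right_comm,
      Real.rpow_sub hl (a - 1)]
    ring_nf
  simp_rw [rpow_eq]
  rw [lintegral_const_mul' _ _ ENNReal.ofReal_ne_top,
    lintegral_lintegral_swap (Measurable.aemeasurable (by fun_prop)),
    setLIntegral_congr_fun measurableSet_Ioi fun l hl ↦ gaussian_eq hl,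
    lintegral_const_mul' _ _ ENNReal.ofReal_ne_top,
    lintegral_Ioi_rpow_mul_exp_neg_mul (sub_pos.2 ha) one_pos,
    ← ENNReal.ofReal_mul (by positivity), ← ENNReal.ofReal_mul
      (one_div_nonneg.2 (Real.Gamma_pos_of_pos ha0).le), div_one, Real.one_rpow]
  ring_nf

end GaussianSubordination

section PoissonKernel

variable {d : ℕ}

lemma two_div_sphereVol (d : ℕ) :
    2 / sphereVol d =
      Real.Gamma ((d + 1) / 2) / (Real.pi ^ (d / 2 : ℝ) * √Real.pi) := by
  have hG : Real.Gamma ((d + 1) / 2) ≠ 0 := (Real.Gamma_pos_of_pos (by positivity)).ne'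
  have sqrt_pi_pow : √Real.pi ^ d = Real.pi ^ (d / 2 : ℝ) := by
    rw [Real.sqrt_eq_rpow, ← Real.rpow_mul_natCast Real.pi_pos.le, one_div_mul_eq_div]
  rw [sphereVol, EuclideanSpace.volume_ball, Fintype.card_fin, ENNReal.ofReal_one, one_pow, one_mul,
    Nat.cast_add_one, Real.Gamma_add_one (by positivity), pow_succ, sqrt_pi_pow,
    ENNReal.toReal_ofReal (div_nonneg (by positivity)
      (mul_nonneg (by positivity) (Real.Gamma_pos_of_pos (by positivity)).le))]
  field_simp

lemma two_div_sphereVol_pos (d : ℕ) : 0 < 2 / sphereVol d := by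
  have hG : 0 < Real.Gamma ((d + 1) / 2) := Real.Gamma_pos_of_pos (by positivity)
  exact two_div_sphereVol d ▸ div_pos hG (by positivity)

lemma poissonKernelEd_nonneg {t : ℝ} (ht : 0 ≤ t) (y : Ed d) : 0 ≤ poissonKernelEd d t y :=
  div_nonneg (mul_nonneg (two_div_sphereVol_pos d).le ht) (by positivity)

lemma measurable_poissonKernelEd :
    Measurable fun q : ℝ × Ed d ↦ poissonKernelEd d q.1 q.2 := by
  unfold poissonKernelEd
  fun_prop

lemma poissonKernelEd_le_div_mul {b t : ℝ} (hb : 0 < b) (hbt : b ≤ t) (y : Ed d) :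
    poissonKernelEd d t y ≤ t / b * poissonKernelEd d b y := by
  have ht : 0 < t := hb.trans_le hbt
  have hc := two_div_sphereVol_pos d
  calc poissonKernelEd d t y
      ≤ 2 / sphereVol d * t / (‖y‖ ^ 2 + b ^ 2) ^ (((d : ℝ) + 1) / 2) := by
        unfold poissonKernelEd
        gcongr
    _ = t / b * poissonKernelEd d b y := by
        unfold poissonKernelEd
        field_simp

lemma poissonKernelEd_le_apply_zero {t : ℝ} (ht : 0 < t) (y : Ed d) :
    poissonKernelEd d t y ≤ poissonKernelEd d t 0 := by
  have hc := two_div_sphereVol_pos d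
  unfold poissonKernelEd
  gcongr
  simp

lemma pow_mul_poissonKernelEd_smul {t : ℝ} (ht : 0 < t) (z : Ed d) :
    t ^ d * poissonKernelEd d t (t • z) = poissonKernelEd d 1 z := by
  have rpow_eq : (‖t • z‖ ^ 2 + t ^ 2) ^ (((d : ℝ) + 1) / 2) =
      t ^ (d + 1) * (‖z‖ ^ 2 + 1 ^ 2) ^ (((d : ℝ) + 1) / 2) := by
    rw [norm_smul, Real.norm_of_nonneg ht.le,
      show (t * ‖z‖) ^ 2 + t ^ 2 = t ^ 2 * (‖z‖ ^ 2 + 1 ^ 2) by ring,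
      Real.mul_rpow (by positivity) (by positivity), ← Real.rpow_natCast_mul ht.le,
      ← Real.rpow_natCast t (d + 1)]
    push_cast
    ring_nf
  rw [poissonKernelEd, rpow_eq, poissonKernelEd, pow_succ]
  field_simp

lemma lintegral_poissonKernelEd_mul {t : ℝ} (ht : 0 < t) (g : Ed d → ℝ≥0∞) :
    ∫⁻ y, ENNReal.ofReal (poissonKernelEd d t y) * g y =
      ∫⁻ z, ENNReal.ofReal (poissonKernelEd d 1 z) * g (t • z) := by
  have lintegral_comp_smul (F : Ed d → ℝ≥0∞) :
      ∫⁻ y, F y = ENNReal.ofReal (t ^ d) * ∫⁻ z, F (t • z) := by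
    rw [← (measurableEmbedding_const_smul₀ ht.ne').lintegral_map,
      Measure.map_addHaar_smul volume ht.ne', lintegral_smul_measure, smul_eq_mul, ← mul_assoc,
      ← ENNReal.ofReal_mul (by positivity), finrank_euclideanSpace_fin, abs_of_pos (by positivity),
      mul_inv_cancel₀ (by positivity), ENNReal.ofReal_one, one_mul]
  rw [lintegral_comp_smul, ← lintegral_const_mul' _ _ ENNReal.ofReal_ne_top]
  simp_rw [← mul_assoc, ← ENNReal.ofReal_mul (show 0 ≤ t ^ d by positivity),
    pow_mul_poissonKernelEd_smul ht]

lemma lintegral_poissonKernelEd {t : ℝ} (ht : 0 < t) :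
    ∫⁻ y, ENNReal.ofReal (poissonKernelEd d t y) = 1 := by
  have hG : Real.Gamma ((d + 1) / 2) ≠ 0 := (Real.Gamma_pos_of_pos (by positivity)).ne'
  have kernel_one (z : Ed d) : ENNReal.ofReal (poissonKernelEd d 1 z) =
      ENNReal.ofReal (2 / sphereVol d) *
        ENNReal.ofReal ((‖z‖ ^ 2 + 1) ^ (-((d + 1) / 2 : ℝ))) := by
    rw [← ENNReal.ofReal_mul (two_div_sphereVol_pos d).le, Real.rpow_neg (by positivity),
      poissonKernelEd, one_pow, mul_one, div_eq_mul_inv]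
  calc ∫⁻ y, ENNReal.ofReal (poissonKernelEd d t y)
      = ∫⁻ z, ENNReal.ofReal (poissonKernelEd d 1 z) := by
        simpa only [mul_one] using lintegral_poissonKernelEd_mul ht fun _ : Ed d ↦ 1
    _ = ENNReal.ofReal (2 / sphereVol d * (Real.pi ^ (d / 2 : ℝ) *
          Real.Gamma ((d + 1) / 2 - d / 2) / Real.Gamma ((d + 1) / 2))) := by
        simp_rw [kernel_one]
        rw [lintegral_const_mul' _ _ ENNReal.ofReal_ne_top, lintegral_norm_sq_add_one_rpow_neg
          (by rw [finrank_euclideanSpace_fin]; linarith), finrank_euclideanSpace_fin,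
          ENNReal.ofReal_mul (two_div_sphereVol_pos d).le]
    _ = 1 := by
        rw [two_div_sphereVol, show ((d : ℝ) + 1) / 2 - d / 2 = 1 / 2 by ring,
          Real.Gamma_one_half_eq, ENNReal.ofReal_eq_one]
        field_simp

lemma integrable_poissonKernelEd {t : ℝ} (ht : 0 < t) : Integrable (poissonKernelEd d t) := by
  refine ⟨(measurable_poissonKernelEd.comp measurable_prodMk_left).aestronglyMeasurable, ?_⟩
  rw [hasFiniteIntegral_iff_ofReal (ae_of_all _ (poissonKernelEd_nonneg ht.le)),
    lintegral_poissonKernelEd ht]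
  exact ENNReal.one_lt_top

lemma integral_poissonKernelEd {t : ℝ} (ht : 0 < t) : ∫ y, poissonKernelEd d t y = 1 := by
  rw [integral_eq_lintegral_of_nonneg_ae (ae_of_all _ (poissonKernelEd_nonneg ht.le))
    (integrable_poissonKernelEd ht).1, lintegral_poissonKernelEd ht, ENNReal.toReal_one]

/-- The time derivative `∂_t p_t(y)` of the Poisson kernel, written as `p_t(y)` times its
logarithmic derivative. -/
def poissonKernelDeriv (d : ℕ) (t : ℝ) (y : Ed d) : ℝ :=
  poissonKernelEd d t y * ((‖y‖ ^ 2 - d * t ^ 2) / (t * (‖y‖ ^ 2 + t ^ 2)))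

lemma measurable_poissonKernelDeriv :
    Measurable fun q : ℝ × Ed d ↦ poissonKernelDeriv d q.1 q.2 :=
  measurable_poissonKernelEd.mul (by fun_prop)

lemma hasDerivAt_poissonKernelEd {t : ℝ} (ht : 0 < t) (y : Ed d) :
    HasDerivAt (poissonKernelEd d · y) (poissonKernelDeriv d t y) t := by
  have hD : 0 < ‖y‖ ^ 2 + t ^ 2 := by positivity
  have deriv_base : HasDerivAt (fun τ ↦ ‖y‖ ^ 2 + τ ^ 2) (2 * t) t := by
    simpa using (hasDerivAt_pow 2 t).const_add (‖y‖ ^ 2)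
  refine (((hasDerivAt_id t).const_mul (2 / sphereVol d)).div
    (deriv_base.rpow_const (p := ((d : ℝ) + 1) / 2) (Or.inl hD.ne')) (by positivity)).congr_deriv ?_
  rw [poissonKernelDeriv, poissonKernelEd, Real.rpow_sub_one hD.ne', id_eq]
  field_simp
  ring

lemma abs_poissonKernelDeriv_le {b t : ℝ} (hb : 0 < b) (hbt : b ≤ t) (y : Ed d) :
    |poissonKernelDeriv d t y| ≤ (d + 1) / b * poissonKernelEd d b y := by
  have ht : 0 < t := hb.trans_le hbt
  have log_deriv_le : |(‖y‖ ^ 2 - d * t ^ 2) / (t * (‖y‖ ^ 2 + t ^ 2))| ≤ (d + 1) / t := by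
    rw [abs_div, abs_of_pos (show 0 < t * (‖y‖ ^ 2 + t ^ 2) by positivity),
      div_le_div_iff₀ (by positivity) ht]
    have abs_le_add : |‖y‖ ^ 2 - d * t ^ 2| ≤ (d + 1) * (‖y‖ ^ 2 + t ^ 2) := by
      rw [abs_le]
      constructor <;> nlinarith [sq_nonneg ‖y‖, sq_nonneg t, mul_nonneg d.cast_nonneg (sq_nonneg t),
        mul_nonneg d.cast_nonneg (sq_nonneg ‖y‖)]
    nlinarith
  calc |poissonKernelDeriv d t y|
      ≤ poissonKernelEd d t y * ((d + 1) / t) := by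
        rw [poissonKernelDeriv, abs_mul, abs_of_nonneg (poissonKernelEd_nonneg ht.le y)]
        exact mul_le_mul_of_nonneg_left log_deriv_le (poissonKernelEd_nonneg ht.le y)
    _ ≤ t / b * poissonKernelEd d b y * ((d + 1) / t) := by
        grw [poissonKernelEd_le_div_mul hb hbt y]
    _ = (d + 1) / b * poissonKernelEd d b y := by field_simp

end PoissonKernel

section PoissonIntegral

variable {d : ℕ} {E : Type*} [NormedAddCommGroup E] [NormedSpace ℝ E] {p : ℝ} {f : Ed d → E}

/-- The Poisson integral `u(x, t) = (p_t ∗ f)(x)` of a function with values in a normed space;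
`poissonIntS` and `poissonInt` are the cases `E = ℝ` and `E = Ed m`. -/
def poissonIntegral (f : Ed d → E) (x : Ed d) (t : ℝ) : E :=
  ∫ y, poissonKernelEd d t y • f (x - y)

lemma poissonIntegral_congr_ae {g : Ed d → E} (hfg : f =ᵐ[volume] g) :
    poissonIntegral f = poissonIntegral g := by
  funext x t
  refine integral_congr_ae ?_
  filter_upwards [(Measure.measurePreserving_sub_left volume x).quasiMeasurePreserving.ae hfg]
    with y hy
  rw [hy]

lemma stronglyMeasurable_integral_smul_sub {k : ℝ × Ed d → ℝ} (hk : Measurable k)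
    (hf : StronglyMeasurable f) :
    StronglyMeasurable fun q : Ed d × ℝ ↦ ∫ y, k (q.2, y) • f (q.1 - y) := by
  refine StronglyMeasurable.integral_prod_right
    (f := fun (q : Ed d × ℝ) y ↦ k (q.2, y) • f (q.1 - y)) ?_
  exact (hk.comp (by fun_prop)).stronglyMeasurable.smul (hf.comp_measurable (by fun_prop))

lemma stronglyMeasurable_poissonIntegral (hf : StronglyMeasurable f) :
    StronglyMeasurable fun q : Ed d × ℝ ↦ poissonIntegral f q.1 q.2 :=
  stronglyMeasurable_integral_smul_sub measurable_poissonKernelEd hf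

lemma integrable_poissonKernelEd_smul (hp : 1 ≤ p) (hf : MemLp f (ENNReal.ofReal p)) {t : ℝ}
    (ht : 0 < t) (x : Ed d) : Integrable fun y ↦ poissonKernelEd d t y • f (x - y) := by
  refine integrable_smul_of_bounded_of_memLp hp (integrable_poissonKernelEd ht)
    (M := poissonKernelEd d t 0) (fun y ↦ ?_)
    (hf.comp_measurePreserving (Measure.measurePreserving_sub_left volume x))
  rw [Real.norm_of_nonneg (poissonKernelEd_nonneg ht.le y)]
  exact poissonKernelEd_le_apply_zero ht y

lemma hasDerivAt_poissonIntegral (hp : 1 ≤ p) (hf : MemLp f (ENNReal.ofReal p)) {t : ℝ}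
    (ht : 0 < t) (x : Ed d) :
    HasDerivAt (poissonIntegral f x) (∫ y, poissonKernelDeriv d t y • f (x - y)) t := by
  have half_pos : 0 < t / 2 := half_pos ht
  have hfx : AEStronglyMeasurable (fun y ↦ f (x - y)) volume :=
    hf.aestronglyMeasurable.comp_measurePreserving (Measure.measurePreserving_sub_left volume x)
  refine (hasDerivAt_integral_of_dominated_loc_of_deriv_le
    (F := fun τ y ↦ poissonKernelEd d τ y • f (x - y))
    (F' := fun τ y ↦ poissonKernelDeriv d τ y • f (x - y))
    (bound := fun y ↦ (d + 1) / (t / 2) * ‖poissonKernelEd d (t / 2) y • f (x - y)‖)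
    (Ioi_mem_nhds (half_lt_self ht)) (Eventually.of_forall fun τ ↦ ?_)
    (integrable_poissonKernelEd_smul hp hf ht x) ?_
    (ae_of_all _ fun y τ (hτ : t / 2 < τ) ↦ ?_)
    ((integrable_poissonKernelEd_smul hp hf half_pos x).norm.const_mul _)
    (ae_of_all _ fun y τ (hτ : t / 2 < τ) ↦ ?_)).2
  · exact (measurable_poissonKernelEd.comp measurable_prodMk_left).aestronglyMeasurable.smul hfx
  · exact (measurable_poissonKernelDeriv.comp measurable_prodMk_left).aestronglyMeasurable.smul hfx
  · rw [norm_smul, norm_smul, ← mul_assoc,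
      Real.norm_of_nonneg (poissonKernelEd_nonneg half_pos.le y)]
    gcongr
    exact abs_poissonKernelDeriv_le half_pos hτ.le y
  · exact (hasDerivAt_poissonKernelEd (half_pos.trans hτ) y).smul_const _

lemma aestronglyMeasurable_deriv_poissonIntegral (hp : 1 ≤ p) (hfm : StronglyMeasurable f)
    (hf : MemLp f (ENNReal.ofReal p)) :
    AEStronglyMeasurable (fun q : Ed d × ℝ ↦ deriv (poissonIntegral f q.1) q.2)
      (volume.prod (volume.restrict (Ioi 0))) := by
  refine (stronglyMeasurable_integral_smul_sub measurable_poissonKernelDeriv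
    hfm).aestronglyMeasurable.congr ?_
  filter_upwards [Measure.quasiMeasurePreserving_snd.ae (ae_restrict_mem measurableSet_Ioi)]
    with q hq using (hasDerivAt_poissonIntegral hp hf hq q.1).deriv.symm

lemma lintegral_eLpNorm_sub_poissonIntegral_norm (hd : d ≠ 0) (hp : 0 < p)
    (hfm : StronglyMeasurable f) (a : ℝ) :
    ∫⁻ y : Ed d, eLpNorm (fun x ↦ f x - poissonIntegral f x ‖y‖) (ENNReal.ofReal p) volume ^ p *
        ENNReal.ofReal (1 / ‖y‖ ^ (d + a)) =
      (volume : Measure (Ed d)).toSphere univ *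
        ∫⁻ r in Ioi 0, eLpNorm (fun x ↦ f x - poissonIntegral f x r) (ENNReal.ofReal p) volume ^ p *
          ENNReal.ofReal (1 / r ^ (1 + a)) := by
  have : Nonempty (Fin d) := Fin.pos_iff_nonempty.1 (Nat.pos_of_ne_zero hd)
  have h_meas : Measurable fun r ↦
      eLpNorm (fun x ↦ f x - poissonIntegral f x r) (ENNReal.ofReal p) volume ^ p := by
    simp_rw [eLpNorm_ofReal_rpow_eq_lintegral hp]
    exact (((hfm.comp_measurable measurable_fst).sub
      (stronglyMeasurable_poissonIntegral hfm)).enorm.pow_const p).lintegral_prod_left'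
  simpa only [finrank_euclideanSpace_fin] using
    lintegral_fun_norm_mul_norm_rpow (μ := (volume : Measure (Ed d))) h_meas a

variable [CompleteSpace E]

lemma tendsto_eLpNorm_poissonIntegral_sub (hp : 1 ≤ p) (hfm : StronglyMeasurable f)
    (hf : MemLp f (ENNReal.ofReal p)) :
    Tendsto (fun t ↦ eLpNorm (fun x ↦ poissonIntegral f x t - f x) (ENNReal.ofReal p) volume)
      (𝓝[>] 0) (𝓝 0) := by
  have hp0 : 0 < p := one_pos.trans_le hp
  have rpow_le : ∀ᶠ t in 𝓝[>] (0 : ℝ),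
      eLpNorm (fun x ↦ poissonIntegral f x t - f x) (ENNReal.ofReal p) volume ^ p ≤
        ∫⁻ z, ENNReal.ofReal (poissonKernelEd d 1 z) *
          eLpNorm (fun x ↦ f (x - t • z) - f x) (ENNReal.ofReal p) volume ^ p := by
    filter_upwards [self_mem_nhdsWithin] with t (ht : 0 < t)
    rw [← lintegral_poissonKernelEd_mul ht fun y ↦
      eLpNorm (fun x ↦ f (x - y) - f x) (ENNReal.ofReal p) volume ^ p]
    exact eLpNorm_integral_smul_sub_rpow_le hp
      (measurable_poissonKernelEd.comp measurable_prodMk_left) (poissonKernelEd_nonneg ht.le)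
      (integral_poissonKernelEd ht) hfm (integrable_poissonKernelEd_smul hp hf ht)
  have tendsto_rpow := tendsto_of_tendsto_of_tendsto_of_le_of_le' tendsto_const_nhds
    ((tendsto_lintegral_mul_eLpNorm_translate_smul hp hf
      (measurable_poissonKernelEd.comp measurable_prodMk_left).ennreal_ofReal
      (lintegral_poissonKernelEd one_pos ▸ ENNReal.one_ne_top)).mono_left nhdsWithin_le_nhds)
    (Eventually.of_forall fun _ ↦ zero_le) rpow_le
  simpa only [← ENNReal.rpow_mul, mul_inv_cancel₀ hp0.ne', ENNReal.rpow_one,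
    ENNReal.zero_rpow_of_pos (inv_pos.2 hp0)] using tendsto_rpow.ennrpow_const p⁻¹

lemma ae_enorm_sub_poissonIntegral_le (hp : 1 ≤ p) (hfm : StronglyMeasurable f)
    (hf : MemLp f (ENNReal.ofReal p)) :
    ∀ᵐ x, ∀ r > 0, ‖f x - poissonIntegral f x r‖ₑ ≤
      ∫⁻ t in Ioc 0 r, ‖deriv (poissonIntegral f x) t‖ₑ := by
  have tendsto_in_measure :
      TendstoInMeasure volume (fun t x ↦ poissonIntegral f x t) (𝓝[>] 0) f :=
    tendstoInMeasure_of_tendsto_eLpNorm (ENNReal.ofReal_pos.2 (one_pos.trans_le hp)).ne'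
      (fun t ↦ ((stronglyMeasurable_poissonIntegral hfm).comp_measurable
        measurable_prodMk_right).aestronglyMeasurable)
      hfm.aestronglyMeasurable (tendsto_eLpNorm_poissonIntegral_sub hp hfm hf)
  obtain ⟨ε, hε, tendsto_ae⟩ := tendsto_in_measure.exists_seq_tendsto_ae'
  filter_upwards [tendsto_ae] with x hx r hr
  refine le_of_tendsto (hx.sub_const _).enorm ?_
  filter_upwards [hε.eventually (Ioc_mem_nhdsGT hr)] with n hn
  calc ‖poissonIntegral f x (ε n) - poissonIntegral f x r‖ₑ
      ≤ ∫⁻ t in Ioc (ε n) r, ‖deriv (poissonIntegral f x) t‖ₑ := by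
        rw [enorm_sub_rev]
        exact enorm_sub_le_lintegral_enorm_deriv hn.2 fun t ht ↦
          (hasDerivAt_poissonIntegral hp hf (hn.1.trans_le ht.1) x).differentiableAt
    _ ≤ ∫⁻ t in Ioc 0 r, ‖deriv (poissonIntegral f x) t‖ₑ :=
        lintegral_mono_set (Ioc_subset_Ioc_left hn.1.le)

lemma lintegral_Ioi_eLpNorm_sub_poissonIntegral_le {s : ℝ} (hp : 1 ≤ p) (hs : 0 < s)
    (hfm : StronglyMeasurable f) (hf : MemLp f (ENNReal.ofReal p)) :
    ∫⁻ r in Ioi 0, eLpNorm (fun x ↦ f x - poissonIntegral f x r) (ENNReal.ofReal p) volume ^ p *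
        ENNReal.ofReal (1 / r ^ (1 + s * p)) ≤
      ENNReal.ofReal (1 / s ^ p) *
        ∫⁻ t in Ioi 0,
          eLpNorm (fun x ↦ deriv (poissonIntegral f x) t) (ENNReal.ofReal p) volume ^ p *
            ENNReal.ofReal (1 / t ^ (s * p - p + 1)) := by
  have hp0 : 0 < p := one_pos.trans_le hp
  rw [lintegral_eLpNorm_rpow_mul hp0 (by fun_prop) (fun _ ↦ ENNReal.ofReal_ne_top)
      ((hfm.comp_measurable measurable_fst).sub
        (stronglyMeasurable_poissonIntegral hfm)).aestronglyMeasurable,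
    lintegral_eLpNorm_rpow_mul hp0 (by fun_prop) (fun _ ↦ ENNReal.ofReal_ne_top)
      (aestronglyMeasurable_deriv_poissonIntegral hp hfm hf),
    ← lintegral_const_mul' _ _ ENNReal.ofReal_ne_top]
  refine lintegral_mono_ae ?_
  filter_upwards [ae_enorm_sub_poissonIntegral_le hp hfm hf] with x hx
  refine le_trans ?_ (lintegral_rpow_lintegral_Ioc_le hp hs
    (stronglyMeasurable_deriv (poissonIntegral f x)).enorm)
  refine setLIntegral_mono' measurableSet_Ioi fun r hr ↦ ?_
  gcongr
  exact hx r hr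

lemma lintegral_eLpNorm_sub_poissonIntegral_norm_le {s : ℝ} (hp : 1 ≤ p) (hs : 0 < s)
    (hf : MemLp f (ENNReal.ofReal p)) :
    ∫⁻ y : Ed d, eLpNorm (fun x ↦ f x - poissonIntegral f x ‖y‖) (ENNReal.ofReal p) volume ^ p *
        ENNReal.ofReal (1 / ‖y‖ ^ (d + s * p)) ≤
      (volume : Measure (Ed d)).toSphere univ * (ENNReal.ofReal (1 / s ^ p) *
        ∫⁻ t in Ioi 0,
          eLpNorm (fun x ↦ deriv (poissonIntegral f x) t) (ENNReal.ofReal p) volume ^ p *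
            ENNReal.ofReal (1 / t ^ (s * p - p + 1))) := by
  have hp0 : 0 < p := one_pos.trans_le hp
  rcases eq_or_ne d 0 with rfl | hd
  -- In dimension `0` every `‖y‖` is `0` and the weight is `1 / 0 = 0`.
  · have rpow_zero : (0 : ℝ) ^ (s * p) = 0 := Real.zero_rpow (by positivity)
    simp [norm_of_subsingleton, rpow_zero]
  obtain ⟨g, hgm, hfg⟩ := hf.aestronglyMeasurable
  have sub_congr (t : ℝ) :
      (fun x ↦ f x - poissonIntegral g x t) =ᵐ[volume] fun x ↦ g x - poissonIntegral g x t :=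
    hfg.sub .rfl
  simp_rw [poissonIntegral_congr_ae hfg, eLpNorm_congr_ae (sub_congr _)]
  rw [lintegral_eLpNorm_sub_poissonIntegral_norm hd hp0 hgm]
  gcongr
  exact lintegral_Ioi_eLpNorm_sub_poissonIntegral_le hp hs hgm (hf.ae_eq hfg)

end PoissonIntegral

theorem poisson_integral_boundary_estimate_general {E : Type*} [NormedAddCommGroup E]
    [NormedSpace ℝ E] [CompleteSpace E] (d : ℕ) :
    ∃ C : ℝ, 0 < C ∧ ∀ p ≥ 1, ∀ s > 0, ∀ f : Ed d → E, MemLp f (ENNReal.ofReal p) volume →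
      (∫⁻ y : Ed d, eLpNorm (fun x ↦ f x - poissonIntegral f x ‖y‖) (ENNReal.ofReal p) volume ^ p *
          ENNReal.ofReal (1 / ‖y‖ ^ (d + s * p))) ≤
        ENNReal.ofReal (C / s ^ p) *
          ∫⁻ t in Ioi 0,
            eLpNorm (fun x ↦ deriv (poissonIntegral f x) t) (ENNReal.ofReal p) volume ^ p *
              ENNReal.ofReal (1 / t ^ (s * p - p + 1)) := by
  set σ : ℝ≥0∞ := (volume : Measure (Ed d)).toSphere univ with hσ
  have σ_le : σ ≤ ENNReal.ofReal (σ.toReal + 1) := by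
    rw [ENNReal.ofReal_add ENNReal.toReal_nonneg zero_le_one,
      ENNReal.ofReal_toReal (measure_ne_top _ _)]
    exact le_self_add
  refine ⟨σ.toReal + 1, by positivity, fun p hp s hs f hf ↦ ?_⟩
  grw [lintegral_eLpNorm_sub_poissonIntegral_norm_le hp hs hf, ← hσ, σ_le]
  rw [← mul_assoc, ← ENNReal.ofReal_mul (by positivity), mul_one_div]

/-- Estimate of the boundary approximation of the Poisson integral:
`∫ ‖f − u(·,|y|)‖_{L^p}^p / |y|^{d+sp} dy ≤ (C/s^p) ∫_0^∞ ‖∂_t u(·,t)‖_{L^p}^p / t^{sp−p+1} dt`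
with `C = C(d,p) > 0`. -/
theorem poisson_integral_boundary_estimate (d : ℕ) (p : ℝ) (hp : 1 < p) :
    ∃ C : ℝ, 0 < C ∧
      ∀ (s : ℝ), s ∈ Set.Ioo (0 : ℝ) 1 →
        ∀ f : Ed d → ℝ, MemLp f (ENNReal.ofReal p) volume →
          (∫⁻ y : Ed d,
              (eLpNorm (fun x => f x - poissonIntS d f x ‖y‖) (ENNReal.ofReal p) volume) ^ p *
                ENNReal.ofReal (1 / ‖y‖ ^ ((d : ℝ) + s * p))) ≤
            ENNReal.ofReal (C / s ^ p) *
              ∫⁻ t in Set.Ioi (0 : ℝ),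
                (eLpNorm (fun x => deriv (fun τ => poissonIntS d f x τ) t)
                    (ENNReal.ofReal p) volume) ^ p *
                  ENNReal.ofReal (1 / t ^ (s * p - p + 1)) := by
  obtain ⟨C, hC, h⟩ := poisson_integral_boundary_estimate_general (E := ℝ) d
  exact ⟨C, hC, fun s hs f hf ↦ h p hp.le s hs.1 f hf⟩
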